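/- For an arbitrary canonical state w ∈ W, any formula ¬[C]^T_X φ ∈ F(w), and any action profile s ∈ Δ^C, there are canonical states w', v ∈ W and a complete action profile δ ∈ Δ^𝒜 such that w ∼_X w', s =_C δ, T ⊆ 𝒯_{w'}, T ⊆ 𝒯_v, (w', δ, v) ∈ M, and φ ∉ F(v). -/

import Mathlib

/- Language: formulas over atomic propositions P, data variables V, actors 𝒜 = A.
   `bel T X φ` is B^T_X φ ; `str C T X φ` is [C]^T_X φ. -/
inductive Formula (P V A : Type) : Type
  | atom : P → Formula P V A
  | neg : Formula P V A → Formula P V A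
  | imp : Formula P V A → Formula P V A → Formula P V A
  | bel : Set V → Set V → Formula P V A → Formula P V A
  | str : Set A → Set V → Set V → Formula P V A → Formula P V A

variable {P V A : Type}

/-- Propositional tautologies: true under every valuation respecting ¬ and →. -/
def Tautology (φ : Formula P V A) : Prop :=
  ∀ v : Formula P V A → Prop,
    (∀ ψ, v (Formula.neg ψ) ↔ ¬ v ψ) →
    (∀ ψ χ, v (Formula.imp ψ χ) ↔ (v ψ → v χ)) →
    v φ

/-- Theorems of the logical system of doxastic strategies. -/
inductive Thm : Formula P V A → Prop
  | taut {φ : Formula P V A} : Tautology φ → Thm φ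
  | truth {X : Set V} {φ : Formula P V A} :
      Thm (Formula.imp (Formula.bel ∅ X φ) φ)
  | negIntro {T X : Set V} {φ : Formula P V A} :
      Thm (Formula.imp (Formula.neg (Formula.bel T X φ))
        (Formula.bel ∅ X (Formula.neg (Formula.bel T X φ))))
  | distrib {T X : Set V} {φ ψ : Formula P V A} :
      Thm (Formula.imp (Formula.bel T X (Formula.imp φ ψ))
        (Formula.imp (Formula.bel T X φ) (Formula.bel T X ψ)))
  | trust {T X Y : Set V} {φ : Formula P V A} :
      Thm (Formula.bel T X (Formula.imp (Formula.bel T Y φ) φ))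
  | monoB {T T' X X' : Set V} {φ : Formula P V A} :
      T ⊆ T' → X ⊆ X' →
      Thm (Formula.imp (Formula.bel T X φ) (Formula.bel T' X' φ))
  | monoS {C C' : Set A} {T T' X X' : Set V} {φ : Formula P V A} :
      T ⊆ T' → X ⊆ X' → C ⊆ C' →
      Thm (Formula.imp (Formula.str C T X φ) (Formula.str C' T' X' φ))
  | coop {C D : Set A} {T X : Set V} {φ ψ : Formula P V A} :
      C ∩ D = ∅ →
      Thm (Formula.imp (Formula.str C T X (Formula.imp φ ψ))
        (Formula.imp (Formula.str D T X φ) (Formula.str (C ∪ D) T X ψ)))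
  | strIntro₁ {C : Set A} {T X : Set V} {φ : Formula P V A} :
      Thm (Formula.imp (Formula.str C T X φ) (Formula.bel T X (Formula.str C T X φ)))
  | strIntro₂ {C : Set A} {T X : Set V} {φ : Formula P V A} :
      Thm (Formula.imp (Formula.bel T X (Formula.str C T X φ)) (Formula.str C T X φ))
  | unavoid {T X Y : Set V} {φ : Formula P V A} :
      Thm (Formula.imp (Formula.bel T X (Formula.str ∅ T Y φ)) (Formula.str ∅ T X φ))
  | pub {T : Set V} {φ : Formula P V A} :
      Thm (Formula.imp (Formula.bel T ∅ φ) (Formula.str ∅ T ∅ φ))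
  | mp {φ ψ : Formula P V A} : Thm (Formula.imp φ ψ) → Thm φ → Thm ψ
  | nec {φ : Formula P V A} : Thm φ → Thm (Formula.bel ∅ ∅ φ)

/-- `Deduces F φ`: φ is derivable from F together with the theorems using only Modus Ponens. -/
inductive Deduces (F : Set (Formula P V A)) : Formula P V A → Prop
  | thm {φ : Formula P V A} : Thm φ → Deduces F φ
  | mem {φ : Formula P V A} : φ ∈ F → Deduces F φ
  | mp {φ ψ : Formula P V A} :
      Deduces F (Formula.imp φ ψ) → Deduces F φ → Deduces F ψ

def Consistent (F : Set (Formula P V A)) : Prop :=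
  ¬ ∃ φ : Formula P V A, Deduces F φ ∧ Deduces F (Formula.neg φ)

def MaximalConsistent (F : Set (Formula P V A)) : Prop :=
  Consistent F ∧ ∀ G : Set (Formula P V A), Consistent G → F ⊆ G → F = G

/-- A game. -/
structure Game (P V A : Type) : Type 1 where
  W : Type
  sim : V → W → W → Prop
  sim_equiv : ∀ x : V, Equivalence (sim x)
  trust : W → Set V
  Δ : Type
  delta_nonempty : Nonempty Δ
  M : W → (A → Δ) → W → Prop
  pi : P → Set W

/-- `w ∼_X u`. -/
def Game.simSet (G : Game P V A) (X : Set V) (w u : G.W) : Prop :=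
  ∀ x ∈ X, G.sim x w u

/-- The satisfaction relation `w ⊨ φ` (as `Sat G φ w`). -/
def Sat (G : Game P V A) : Formula P V A → G.W → Prop
  | Formula.atom p, w => w ∈ G.pi p
  | Formula.neg φ, w => ¬ Sat G φ w
  | Formula.imp φ ψ, w => Sat G φ w → Sat G ψ w
  | Formula.bel T X φ, w =>
      ∀ u : G.W, G.simSet X w u → T ⊆ G.trust u → Sat G φ u
  | Formula.str C T X φ, w =>
      ∃ s : {a : A // a ∈ C} → G.Δ,
        ∀ (u v : G.W) (δ : A → G.Δ),
          G.simSet X w u → T ⊆ G.trust u →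
          (∀ (a : A) (h : a ∈ C), s ⟨a, h⟩ = δ a) →
          G.M u δ v → T ⊆ G.trust v → Sat G φ v

/- ===================== Canonical game ===================== -/

/-- One block `X_i, b_i, T_i, F_i` of a canonical state. -/
structure Block (P V A B : Type) where
  X : Set V
  b : B
  T : Set V
  F : Set (Formula P V A)

variable {B : Type}

/-- `F(w)`: the last set of formulae of the sequence (or `F0` for the root). -/
def cF (F0 : Set (Formula P V A)) (l : List (Block P V A B)) : Set (Formula P V A) :=
  l.getLast?.elim F0 Block.F

/-- `𝒯_w = T(w)`: the last dataset of the sequence (or `T0` for the root). -/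
def cTrust (T0 : Set V) (l : List (Block P V A B)) : Set V :=
  l.getLast?.elim T0 Block.T

/-- Membership of a sequence in the set of canonical states `W`. -/
inductive IsState (T0 : Set V) (F0 : Set (Formula P V A)) :
    List (Block P V A B) → Prop
  | nil :
      (∀ (Y : Set V) (ψ : Formula P V A),
        Formula.imp (Formula.bel T0 Y ψ) ψ ∈ F0) →
      IsState T0 F0 []
  | snoc {l : List (Block P V A B)} {bl : Block P V A B} :
      IsState T0 F0 l →
      MaximalConsistent bl.F →
      (∀ φ : Formula P V A, Formula.bel ∅ bl.X φ ∈ cF F0 l → φ ∈ bl.F) →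
      (∀ (Y : Set V) (ψ : Formula P V A),
        Formula.imp (Formula.bel bl.T Y ψ) ψ ∈ bl.F) →
      IsState T0 F0 (l ++ [bl])

/-- The canonical states. -/
def CState (T0 : Set V) (F0 : Set (Formula P V A)) (B : Type) : Type :=
  {l : List (Block P V A B) // IsState T0 F0 l}

attribute [local instance] Classical.propDecidable

/-- Length of the longest common prefix of two sequences. -/
noncomputable def cpl {α : Type} : List α → List α → Nat
  | a :: as, b :: bs => if a = b then cpl as bs + 1 else 0
  | _, _ => 0

/-- The blocks labelling the edges on the unique simple path between two
nodes of the canonical tree. -/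
noncomputable def pathBlocks (w u : List (Block P V A B)) : List (Block P V A B) :=
  w.drop (cpl w u) ++ u.drop (cpl w u)

/-- `w ∼_x u` in the canonical game: every edge along the unique simple path
between `w` and `u` is labelled with `x`. -/
def csimVar (x : V) (w u : List (Block P V A B)) : Prop :=
  ∀ bl ∈ pathBlocks w u, x ∈ bl.X

/-- `w ∼_X u` in the canonical game. -/
def csim (X : Set V) (w u : List (Block P V A B)) : Prop :=
  ∀ x ∈ X, csimVar x w u

/-- The canonical mechanism `M`. -/
def Mech (T0 : Set V) (F0 : Set (Formula P V A))
    (w : CState T0 F0 B) (δ : A → Formula P V A × CState T0 F0 B)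
    (v : CState T0 F0 B) : Prop :=
  ∀ (C : Set A) (T X : Set V) (φ : Formula P V A),
    Formula.str C T X φ ∈ cF F0 w.1 →
    (∀ a ∈ C, (δ a).1 = φ) →
    (∀ a ∈ C, csim X w.1 (δ a).2.1) →
    T ⊆ cTrust T0 w.1 → T ⊆ cTrust T0 v.1 →
    φ ∈ cF F0 v.1

/-- Satisfaction `w ⊨ φ` on the canonical game (as `CSat T0 F0 φ w`). -/
def CSat (T0 : Set V) (F0 : Set (Formula P V A)) :
    Formula P V A → CState T0 F0 B → Prop
  | Formula.atom p, w => Formula.atom p ∈ cF F0 w.1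
  | Formula.neg φ, w => ¬ CSat T0 F0 φ w
  | Formula.imp φ ψ, w => CSat T0 F0 φ w → CSat T0 F0 ψ w
  | Formula.bel T X φ, w =>
      ∀ u : CState T0 F0 B, csim X w.1 u.1 → T ⊆ cTrust T0 u.1 → CSat T0 F0 φ u
  | Formula.str C T X φ, w =>
      ∃ s : {a : A // a ∈ C} → Formula P V A × CState T0 F0 B,
        ∀ (u v : CState T0 F0 B) (δ : A → Formula P V A × CState T0 F0 B),
          csim X w.1 u.1 → T ⊆ cTrust T0 u.1 →
          (∀ (a : A) (h : a ∈ C), s ⟨a, h⟩ = δ a) →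
          Mech T0 F0 u δ v → T ⊆ cTrust T0 v.1 → CSat T0 F0 φ v

/- ===================== Harmony ===================== -/

/-- Conjunction definable from ¬ and →. -/
def fand (φ ψ : Formula P V A) : Formula P V A :=
  Formula.neg (Formula.imp φ (Formula.neg ψ))

/-- A canonical tautology (verum). -/
noncomputable def verum (P V A : Type) [Nonempty (Formula P V A)] : Formula P V A :=
  Formula.imp (Classical.arbitrary (Formula P V A)) (Classical.arbitrary (Formula P V A))

/-- Conjunction of a finite list of formulae. -/
noncomputable def conjList [Nonempty (Formula P V A)] :
    List (Formula P V A) → Formula P V A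
  | [] => verum P V A
  | φ :: l => fand φ (conjList l)

/-- The pair `(F, G)` is in `T`-harmony: `F ⊬ [∅]^T_V ¬⋀G'` for each finite `G' ⊆ G`. -/
def THarmony [Nonempty (Formula P V A)] (T : Set V)
    (F G : Set (Formula P V A)) : Prop :=
  ∀ l : List (Formula P V A), (∀ ψ ∈ l, ψ ∈ G) →
    ¬ Deduces F (Formula.str ∅ T (Set.univ : Set V) (Formula.neg (conjList l)))

theorem h_tautmp {φ ψ : Formula P V A} (h : Tautology (Formula.imp φ ψ)) (h2 : Thm φ) : Thm ψ :=
  Thm.mp (Thm.taut h) h2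

theorem h_mono {F G : Set (Formula P V A)} (h : F ⊆ G) {χ} (hd : Deduces F χ) : Deduces G χ := by
  induction hd with
  | thm h => exact .thm h
  | mem h' => exact .mem (h h')
  | mp _ _ a b => exact .mp a b

theorem h_ded {F : Set (Formula P V A)} {α χ : Formula P V A} (hd : Deduces (insert α F) χ) :
    Deduces F (Formula.imp α χ) := by
  have K : ∀ β : Formula P V A, Thm (Formula.imp β (Formula.imp α β)) := fun β =>
    Thm.taut (by intro v hn hi; simp only [hi]; tauto)
  induction hd with
  | @thm χ h => exact .mp (.thm (K χ)) (.thm h)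
  | @mem χ h =>
    rcases h with h | h
    · subst h
      exact .thm (Thm.taut (by intro v hn hi; simp only [hi]; tauto))
    · exact .mp (.thm (K χ)) (.mem h)
  | @mp β χ _ _ a b =>
    refine .mp (.mp (.thm (Thm.taut ?_)) a) b
    intro v hn hi; simp only [hi]; tauto

theorem mcs_closed {F : Set (Formula P V A)} (hF : MaximalConsistent F) {χ} (hd : Deduces F χ) :
    χ ∈ F := by
  have : F = insert χ F := by
    apply hF.2 _ _ (Set.subset_insert _ _)
    rintro ⟨ψ, h1, h2⟩
    exact hF.1 ⟨ψ, .mp (h_ded h1) hd, .mp (h_ded h2) hd⟩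
  rw [this]; exact Set.mem_insert _ _

theorem mcs_thm {F : Set (Formula P V A)} (hF : MaximalConsistent F) {χ ψ}
    (h : Thm (Formula.imp χ ψ)) (hd : χ ∈ F) : ψ ∈ F :=
  mcs_closed hF (.mp (.thm h) (.mem hd))

theorem mcs_mp {F : Set (Formula P V A)} (hF : MaximalConsistent F) {χ ψ}
    (h : Formula.imp χ ψ ∈ F) (hd : χ ∈ F) : ψ ∈ F :=
  mcs_closed hF (.mp (.mem h) (.mem hd))

theorem mcs_not {F : Set (Formula P V A)} (hF : MaximalConsistent F) {χ}
    (h : Formula.neg χ ∈ F) (hd : χ ∈ F) : False :=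
  hF.1 ⟨χ, .mem hd, .mem h⟩

theorem mcs_neg {F : Set (Formula P V A)} (hF : MaximalConsistent F) {χ}
    (h : χ ∉ F) : Formula.neg χ ∈ F := by
  by_contra hc
  have : F = insert χ F := by
    apply hF.2 _ _ (Set.subset_insert _ _)
    rintro ⟨ψ, h1, h2⟩
    apply hc
    apply mcs_closed hF
    refine .mp (.mp (.thm (Thm.taut ?_)) (h_ded h1)) (h_ded h2)
    intro v hn hi; simp only [hi, hn]; tauto
  exact h (by rw [this]; exact Set.mem_insert _ _)

theorem h_lind {F : Set (Formula P V A)} (hF : Consistent F) :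
    ∃ G, F ⊆ G ∧ MaximalConsistent G := by
  obtain ⟨G, hFG, hG⟩ := zorn_subset_nonempty {G : Set (Formula P V A) | Consistent G} (by
    intro c hc hch hne
    have key : ∀ χ, Deduces (⋃₀ c) χ → ∃ s ∈ c, Deduces s χ := by
      intro χ hd
      induction hd with
      | thm h => obtain ⟨s, hs⟩ := hne; exact ⟨s, hs, .thm h⟩
      | mem h => obtain ⟨s, hs, h⟩ := h; exact ⟨s, hs, .mem h⟩
      | mp _ _ a b =>
        obtain ⟨s, hs, a⟩ := a
        obtain ⟨t, ht, b⟩ := b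
        rcases hch.total hs ht with h | h
        · exact ⟨t, ht, .mp (h_mono h a) b⟩
        · exact ⟨s, hs, .mp a (h_mono h b)⟩
    refine ⟨⋃₀ c, ?_, fun s hs => Set.subset_sUnion_of_mem hs⟩
    rintro ⟨χ, a, b⟩
    obtain ⟨s, hs, a⟩ := key _ a
    obtain ⟨t, ht, b⟩ := key _ b
    rcases hch.total hs ht with h | h
    · exact hc ht ⟨χ, h_mono h a, b⟩
    · exact hc hs ⟨χ, a, h_mono h b⟩) F hF
  refine ⟨G, hFG, hG.1, fun H hH hGH => ?_⟩
  exact Set.Subset.antisymm hGH (hG.2 hH hGH)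

/-- A directed family `f` which is never refuted by a normal box extends to a maximal set. -/
theorem h_box {I : Type} (i0 : I) (f : I → Formula P V A) (Box : Formula P V A → Prop)
    (hT : ∀ χ, Thm χ → Box χ)
    (hM : ∀ χ ψ, Box (Formula.imp χ ψ) → Box χ → Box ψ)
    (hdir : ∀ i j, ∃ k, Thm (Formula.imp (f k) (f i)) ∧ Thm (Formula.imp (f k) (f j)))
    (hno : ∀ i, ¬ Box (Formula.neg (f i))) :
    ∃ G, MaximalConsistent G ∧ ∀ i χ, Box (Formula.imp (f i) χ) → χ ∈ G := by
  have key : ∀ χ, Deduces {χ | ∃ i, Box (Formula.imp (f i) χ)} χ →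
      ∃ i, Box (Formula.imp (f i) χ) := by
    intro χ hd
    induction hd with
    | thm h =>
      refine ⟨i0, hT _ (h_tautmp ?_ h)⟩
      intro v hn hi; simp only [hi]; tauto
    | mem h => exact h
    | mp _ _ a b =>
      obtain ⟨i, a⟩ := a
      obtain ⟨j, b⟩ := b
      obtain ⟨k, hk1, hk2⟩ := hdir i j
      refine ⟨k, hM _ _ (hM _ _ (hT _ ?_) a) b⟩
      refine Thm.mp (Thm.mp (Thm.taut ?_) hk1) hk2
      intro v hn hi; simp only [hi]; tauto
  obtain ⟨G, hG, hm⟩ := h_lind (F := {χ | ∃ i, Box (Formula.imp (f i) χ)}) (by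
    rintro ⟨χ, a, b⟩
    obtain ⟨i, a⟩ := key _ a
    obtain ⟨j, b⟩ := key _ b
    obtain ⟨k, hk1, hk2⟩ := hdir i j
    refine hno k (hM _ _ (hM _ _ (hT _ ?_) a) b)
    refine Thm.mp (Thm.mp (Thm.taut ?_) hk1) hk2
    intro v hn hi; simp only [hi, hn]; tauto)
  exact ⟨G, hm, fun i χ h => hG ⟨i, h⟩⟩

def hchain (l : List (Formula P V A)) (φ : Formula P V A) : Formula P V A :=
  l.foldr Formula.imp φ

theorem hchain_val (v : Formula P V A → Prop)
    (hi : ∀ ψ χ, v (Formula.imp ψ χ) ↔ (v ψ → v χ)) (l : List (Formula P V A)) (φ) :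
    v (hchain l φ) ↔ ((∀ ψ ∈ l, v ψ) → v φ) := by
  induction l with
  | nil => simp [hchain]
  | cons a l ih =>
    have : hchain (a :: l) φ = Formula.imp a (hchain l φ) := rfl
    rw [this, hi, ih]; simp only [List.forall_mem_cons]; tauto

theorem hchain_mono {l l' : List (Formula P V A)} (h : l ⊆ l') (φ) :
    Thm (Formula.imp (hchain l φ) (hchain l' φ)) := by
  apply Thm.taut
  intro v hn hi
  simp only [hi, hchain_val v hi]
  intro a b
  exact a fun ψ hψ => b ψ (h hψ)

theorem thm_bel {T X : Set V} {χ : Formula P V A} (h : Thm χ) : Thm (Formula.bel T X χ) :=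
  Thm.mp (Thm.monoB (Set.empty_subset _) (Set.empty_subset _)) (Thm.nec h)

theorem thm_str {T X : Set V} {χ : Formula P V A} (h : Thm χ) :
    Thm (Formula.str ∅ T X χ) :=
  Thm.mp (Thm.monoS subset_rfl (Set.empty_subset _) subset_rfl) (Thm.mp Thm.pub (thm_bel h))

theorem thm_strK {T X : Set V} {χ ψ : Formula P V A} :
    Thm (Formula.imp (Formula.str ∅ T X (Formula.imp χ ψ))
      (Formula.imp (Formula.str ∅ T X χ) (Formula.str (∅ : Set A) T X ψ))) := by
  have := Thm.coop (C := (∅ : Set A)) (D := ∅) (T := T) (X := X) (φ := χ) (ψ := ψ) (by simp)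
  rwa [Set.union_empty] at this

theorem h_coop {F : Set (Formula P V A)} (hF : MaximalConsistent F) {C : Set A} {T X : Set V}
    {φ : Formula P V A} (D : Formula P V A → Set A) (hDC : ∀ ψ, D ψ ⊆ C)
    (hdis : ∀ ψ χ, ψ ≠ χ → D ψ ∩ D χ = ∅) (l : List (Formula P V A)) (hnd : l.Nodup)
    (hl : ∀ ψ ∈ l, Formula.str (D ψ) T X ψ ∈ F) (E : Set A) (hE : E ⊆ C)
    (hEd : ∀ ψ ∈ l, E ∩ D ψ = ∅) (h : Formula.str E T X (hchain l φ) ∈ F) :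
    Formula.str C T X φ ∈ F := by
  induction l generalizing E with
  | nil => exact mcs_thm hF (Thm.monoS subset_rfl subset_rfl hE) h
  | cons a l ih =>
    rw [List.nodup_cons] at hnd
    refine ih hnd.2 (fun ψ hψ => hl ψ (List.mem_cons_of_mem _ hψ)) (E ∪ D a)
      (Set.union_subset hE (hDC a)) ?_ ?_
    · intro ψ hψ
      rw [Set.union_inter_distrib_right, hEd ψ (List.mem_cons_of_mem _ hψ), hdis a ψ, Set.union_empty]
      rintro rfl; exact hnd.1 hψ
    · exact mcs_mp hF (mcs_thm hF (Thm.coop (hEd a List.mem_cons_self)) h) (hl a List.mem_cons_self)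

theorem cF_snoc (F0 : Set (Formula P V A)) (l : List (Block P V A B)) (bl) :
    cF F0 (l ++ [bl]) = bl.F := by simp [cF]

theorem cTrust_snoc (T0 : Set V) (l : List (Block P V A B)) (bl) :
    cTrust T0 (l ++ [bl]) = bl.T := by simp [cTrust]

theorem state_mcs {T0 : Set V} {F0 : Set (Formula P V A)} (hF0 : MaximalConsistent F0)
    {l : List (Block P V A B)} (h : IsState T0 F0 l) : MaximalConsistent (cF F0 l) := by
  cases h with
  | nil _ => exact hF0
  | snoc _ h _ _ => rw [cF_snoc]; exact h

theorem cpl_snoc {α : Type} (l : List α) (b : α) : cpl l (l ++ [b]) = l.length := by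
  induction l with
  | nil => simp [cpl]
  | cons a l ih => simp [cpl, ih]

theorem cpl_le {α : Type} (l u : List α) (b : α) (h : ¬ (l ++ [b]) <+: u) :
    cpl (l ++ [b]) u ≤ l.length := by
  induction l generalizing u with
  | nil =>
    cases u with
    | nil => simp [cpl]
    | cons c u =>
      by_cases hb : b = c
      · subst hb; simp at h
      · simp [cpl, hb]
  | cons a l ih =>
    cases u with
    | nil => simp [cpl]
    | cons c u =>
      by_cases hb : a = c
      · subst hb
        have := ih u (by simpa using h)
        simpa [cpl] using this
      · simp [cpl, hb]

theorem csim_child (X : Set V) (l : List (Block P V A B)) (bl) (h : bl.X = X) :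
    csim X l (l ++ [bl]) := by
  intro x hx b hb
  simp [pathBlocks, cpl_snoc] at hb
  subst hb; rw [h]; exact hx

theorem csim_sub (Y : Set V) (l u : List (Block P V A B)) (bl) (h : ¬ (l ++ [bl]) <+: u)
    (hs : csim Y (l ++ [bl]) u) : Y ⊆ bl.X := by
  intro x hx
  apply hs x hx
  rw [pathBlocks, List.drop_append_of_le_length (cpl_le l u bl h)]
  simp

/-- for any canonical state w, any ¬[C]^T_X φ ∈ F(w), and any action
profile s ∈ Δ^C, there are canonical states w', v and a complete action profile δ
such that w ∼_X w', s =_C δ, T ⊆ 𝒯_{w'}, T ⊆ 𝒯_v, (w', δ, v) ∈ M, and φ ∉ F(v). -/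
theorem strategy_child_exists {P V A B : Type}
    (T0 : Set V) (F0 : Set (Formula P V A))
    (hF0 : MaximalConsistent F0) (hB : Cardinal.mk A < Cardinal.mk B)
    (w : CState T0 F0 B) (C : Set A) (T X : Set V) (φ : Formula P V A)
    (h : Formula.neg (Formula.str C T X φ) ∈ cF F0 w.1)
    (s : {a : A // a ∈ C} → Formula P V A × CState T0 F0 B) :
    ∃ (w' v : CState T0 F0 B) (δ : A → Formula P V A × CState T0 F0 B),
      csim X w.1 w'.1 ∧
      (∀ (a : A) (ha : a ∈ C), s ⟨a, ha⟩ = δ a) ∧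
      T ⊆ cTrust T0 w'.1 ∧ T ⊆ cTrust T0 v.1 ∧
      Mech T0 F0 w' δ v ∧
      φ ∉ cF F0 v.1 := by
  have hFw := state_mcs hF0 w.2
  -- a fresh label
  obtain ⟨b, hb⟩ : ∃ b : B, ∀ a : {a : A // a ∈ C},
      ((s a).2.1[w.1.length]?).map Block.b ≠ some b := by
    by_contra hc
    push Not at hc
    choose g hg using hc
    refine absurd hB (not_lt.mpr ?_)
    refine Cardinal.mk_le_of_injective (f := fun b => (g b).1) ?_
    intro x y hxy
    have h1 := hg x
    rw [Subtype.ext hxy, hg y] at h1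
    exact (Option.some.inj h1).symm
  let D : Formula P V A → Set A := fun ψ => {a | ∃ ha : a ∈ C, (s ⟨a, ha⟩).1 = ψ}
  have hDC : ∀ ψ, D ψ ⊆ C := fun ψ a ha => ha.1
  have hdis : ∀ ψ χ, ψ ≠ χ → D ψ ∩ D χ = ∅ := by
    intro ψ χ hne
    ext a
    simp only [Set.mem_inter_iff, Set.mem_empty_iff_false, iff_false]
    rintro ⟨⟨_, h1⟩, ⟨_, h2⟩⟩
    exact hne (h1.symm.trans h2)
  let I := {l : List (Formula P V A) // ∀ ψ ∈ l, Formula.str (D ψ) T X ψ ∈ cF F0 w.1}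
  let i0 : I := ⟨[], by simp⟩
  have happ : ∀ i j : I, ∀ ψ ∈ i.1 ++ j.1, Formula.str (D ψ) T X ψ ∈ cF F0 w.1 := by
    intro i j ψ hψ
    rcases List.mem_append.1 hψ with h | h
    · exact i.2 _ h
    · exact j.2 _ h
  let N : Formula P V A → Formula P V A := fun χ => Formula.str ∅ T Set.univ χ
  have hN : ∀ {l l' : List (Formula P V A)}, l ⊆ l' →
      Thm (Formula.imp (Formula.neg (N (hchain l' φ))) (Formula.neg (N (hchain l φ)))) := by
    intro l l' hll
    refine h_tautmp ?_ (Thm.mp (thm_strK (T := T) (X := Set.univ)) (thm_str (hchain_mono hll φ)))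
    intro v hn hi; simp only [hi, hn, N]; tauto
  have hI : ∀ i : I, Formula.str ∅ T X (hchain i.1 φ) ∉ cF F0 w.1 := by
    intro i hi
    refine mcs_not hFw h ?_
    refine h_coop hFw D hDC hdis i.1.dedup (List.nodup_dedup _)
      (fun ψ hψ => i.2 ψ (List.mem_dedup.1 hψ)) ∅ (Set.empty_subset _) (by simp) ?_
    refine mcs_thm hFw (Thm.mp thm_strK (thm_str (hchain_mono ?_ φ))) hi
    exact fun ψ hψ => List.mem_dedup.2 hψ
  obtain ⟨F', hF', hF'2⟩ := h_box i0 (fun i : I => Formula.neg (N (hchain i.1 φ)))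
    (fun χ => Formula.bel T X χ ∈ cF F0 w.1)
    (fun χ hχ => mcs_closed hFw (.thm (thm_bel hχ)))
    (fun χ ψ h1 h2 => mcs_mp hFw (mcs_thm hFw Thm.distrib h1) h2)
    (fun i j => ⟨⟨i.1 ++ j.1, happ i j⟩, hN (List.subset_append_left _ _),
      hN (List.subset_append_right _ _)⟩)
    (by
      intro i hi
      refine hI i (mcs_thm hFw (Thm.unavoid (Y := Set.univ)) ?_)
      refine mcs_mp hFw (mcs_thm hFw Thm.distrib (mcs_closed hFw (.thm (thm_bel ?_)))) hi
      refine Thm.taut ?_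
      intro v hn hi; simp only [hi, hn, N]; tauto)
  have hB' : ∀ χ, Formula.bel T X χ ∈ cF F0 w.1 → χ ∈ F' := by
    intro χ hχ
    refine hF'2 i0 χ ?_
    refine mcs_mp hFw (mcs_thm hFw Thm.distrib (mcs_closed hFw (.thm (thm_bel ?_)))) hχ
    refine Thm.taut ?_
    intro v hn hi; simp only [hi]; tauto
  have hNF : ∀ i : I, Formula.neg (N (hchain i.1 φ)) ∈ F' := by
    intro i
    refine hF'2 i _ (mcs_closed hFw (.thm (thm_bel (Thm.taut ?_))))
    intro v hn hi; simp only [hi]; tauto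
  -- strategic facts in F' come from w
  have hback : ∀ (E : Set A) ψ, Formula.str E T X ψ ∈ F' → Formula.str E T X ψ ∈ cF F0 w.1 := by
    intro E ψ hψ
    by_contra hc
    have h1 : Formula.bel T X (Formula.str E T X ψ) ∉ cF F0 w.1 :=
      fun h1 => hc (mcs_thm hFw Thm.strIntro₂ h1)
    have h2 := mcs_thm hFw Thm.negIntro (mcs_neg hFw h1)
    have h3 := hB' _ (mcs_thm hFw (Thm.monoB (Set.empty_subset T) subset_rfl) h2)
    exact mcs_not hF' h3 (mcs_thm hF' Thm.strIntro₁ hψ)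
  obtain ⟨G, hG, hG2⟩ := h_box i0 (fun i : I => Formula.neg (hchain i.1 φ))
    (fun χ => N χ ∈ F')
    (fun χ hχ => mcs_closed hF' (.thm (thm_str hχ)))
    (fun χ ψ h1 h2 => mcs_mp hF' (mcs_thm hF' thm_strK h1) h2)
    (by
      intro i j
      refine ⟨⟨i.1 ++ j.1, happ i j⟩, ?_, ?_⟩
      · refine h_tautmp ?_ (hchain_mono (List.subset_append_left i.1 j.1) φ)
        intro v hn hi; simp only [hi, hn]; tauto
      · refine h_tautmp ?_ (hchain_mono (List.subset_append_right i.1 j.1) φ)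
        intro v hn hi; simp only [hi, hn]; tauto)
    (by
      intro i hi
      refine mcs_not hF' (hNF i) ?_
      refine mcs_mp hF' (mcs_thm hF' thm_strK (mcs_closed hF' (.thm (thm_str ?_)))) hi
      refine Thm.taut ?_
      intro v hn hi; simp only [hi, hn]; tauto)
  have hGN : ∀ χ, N χ ∈ F' → χ ∈ G := by
    intro χ hχ
    refine hG2 i0 χ ?_
    refine mcs_mp hF' (mcs_thm hF' thm_strK (mcs_closed hF' (.thm (thm_str ?_)))) hχ
    refine Thm.taut ?_
    intro v hn hi; simp only [hi]; tauto
  have hGB : ∀ χ, Formula.bel T ∅ χ ∈ F' → χ ∈ G := fun χ hχ =>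
    hGN χ (mcs_thm hF' (Thm.monoS subset_rfl (Set.empty_subset _) subset_rfl)
      (mcs_thm hF' Thm.pub hχ))
  have hGS : ∀ ψ, Formula.str (D ψ) T X ψ ∈ cF F0 w.1 → ψ ∈ G := by
    intro ψ hψ
    refine hG2 ⟨[ψ], by simpa using hψ⟩ ψ (mcs_closed hF' (.thm (thm_str (Thm.taut ?_))))
    intro v hn hi; simp only [hi, hn, hchain_val v hi]; simp; tauto
  have hGφ : φ ∉ G := by
    intro hφ
    refine mcs_not hG (hG2 i0 (Formula.neg φ) (mcs_closed hF' (.thm (thm_str (Thm.taut ?_))))) hφ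
    intro v hn hi; simp only [hi, hn, hchain_val v hi]; simp [i0]
  let bl1 : Block P V A B := ⟨X, b, T, F'⟩
  let bl2 : Block P V A B := ⟨∅, b, T, G⟩
  have hs1 : IsState T0 F0 (w.1 ++ [bl1]) := IsState.snoc w.2 hF'
    (fun χ hχ => hB' χ (mcs_thm hFw (Thm.monoB (Set.empty_subset T) subset_rfl) hχ))
    (fun Y ψ => hB' _ (mcs_closed hFw (.thm Thm.trust)))
  have hs2 : IsState T0 F0 ((w.1 ++ [bl1]) ++ [bl2]) := IsState.snoc hs1 hG
    (fun χ hχ => hGB χ (mcs_thm hF' (Thm.monoB (Set.empty_subset T) subset_rfl)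
      (by rw [cF_snoc] at hχ; exact hχ)))
    (fun Y ψ => hGB _ (mcs_closed hF' (.thm Thm.trust)))
  refine ⟨⟨_, hs1⟩, ⟨_, hs2⟩,
    fun a => if ha : a ∈ C then s ⟨a, ha⟩ else (Formula.imp φ φ, w),
    csim_child X w.1 bl1 rfl, ?_, ?_, ?_, ?_, ?_⟩
  · intro a ha; simp [ha]
  · rw [cTrust_snoc]
  · rw [cTrust_snoc]
  · intro E T' Y ψ hE h1 h2 h3 h4
    rw [cF_snoc] at hE ⊢
    rw [cTrust_snoc] at h3
    change ψ ∈ G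
    change Formula.str E T' Y ψ ∈ F' at hE
    change T' ⊆ T at h3
    by_cases hEC : E ⊆ C
    · rcases E.eq_empty_or_nonempty with rfl | ⟨a, ha⟩
      · exact hGN ψ (mcs_thm hF' (Thm.monoS h3 (Set.subset_univ _) subset_rfl) hE)
      · have hY : Y ⊆ X := by
          have h5 := h2 a ha
          simp only [hEC ha, dif_pos] at h5
          refine csim_sub Y w.1 _ bl1 ?_ h5
          rintro ⟨t, ht⟩
          apply hb ⟨a, hEC ha⟩
          rw [← ht]
          simp [bl1]
        apply hGS
        apply hback
        refine mcs_thm hF' (Thm.monoS h3 hY ?_) hE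
        intro a ha
        refine ⟨hEC ha, ?_⟩
        have h5 := h1 a ha
        simpa only [hEC ha, dif_pos] using h5
    · obtain ⟨a, ha, haC⟩ := Set.not_subset.1 hEC
      have h5 := h1 a ha
      simp only [haC, dif_neg, not_false_eq_true] at h5
      rw [← h5]
      refine mcs_closed hG (.thm (Thm.taut ?_))
      intro v hn hi; simp only [hi]; tauto
  · rw [cF_snoc]; exact hGφ
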